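/- Let n ≥ 5 and let P be the regular n-gon on the unit circle, i.e. p_i = (cos(2πi/n), sin(2πi/n)) for i = 0, …, n−1. Then the number of length maximal triangulations of P is exactly n · 2^{n−5}. -/

import Mathlib

/-!
The length of a diagonal of the regular `n`-gon depends only on the number of sides it spans and is
smallest exactly for the ears `{b, b + 2}`. The length maximal triangulations turn out to be those
with exactly two ears.

* Every triangulation has an ear, and a diagonal spanning at least three sides is the base of a
  triangle. If there are at most two ears, one of the two other sides of this triangle is a side of
  the polygon, since otherwise three disjoint arcs would each contain an ear
  (`IsTriangulation.step_down`). These facts come from cutting the polygon open at a vertex: a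
  non-crossing family of intervals of length at least two in `{0, …, m}` has at most `m - 1` members
  (`Noncr.card_le`), so a triangulation, with the chord `(0, n - 1)` added, is a maximal such family.
* Hence a triangulation with at most two ears grows from an ear by adding one side at a time, on
  the left or on the right: it is a `snake b S`, where `b` is the start of the ear and `S` the set
  of steps to the left (`IsTriangulation.eq_snake`). Its diagonals span `2, 3, …, n - 2` sides, so
  all snakes have the same list of lengths, containing the minimal length at most twice.
* A triangulation with three or more ears has the minimal length at least three times, so its
  sorted list of lengths is lexicographically smaller (`lex_of_three_ears`).
* There are `n * 2 ^ (n - 4)` pairs `(b, S)`, and each snake arises from exactly two of them, one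
  for each of its ears (`card_twoEared`).
-/


/-- The point on the unit circle of `ℝ²` at angle `θ`. -/
noncomputable def pt (θ : ℝ) : EuclideanSpace ℝ (Fin 2) :=
  (WithLp.equiv 2 (Fin 2 → ℝ)).symm ![Real.cos θ, Real.sin θ]

variable {n : ℕ} [NeZero n]

/-- `k` lies strictly between `i` and `j` in counterclockwise cyclic order. -/
def CcwBtw (i k j : ZMod n) : Prop :=
  0 < (k - i).val ∧ (k - i).val < (j - i).val

/-- `d` is a diagonal of the convex polygon on indices `ZMod n`. -/
def IsDiag (d : Sym2 (ZMod n)) : Prop :=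
  ∃ i j : ZMod n, d = s(i, j) ∧ j ≠ i - 1 ∧ j ≠ i ∧ j ≠ i + 1

/-- `d` is a chord, i.e. a pair of cyclically consecutive indices. -/
def IsChord (d : Sym2 (ZMod n)) : Prop :=
  ∃ i : ZMod n, d = s(i, i + 1)

/-- Two diagonals `{i, j}` and `{k, l}` cross if exactly one of `k`, `l` lies
strictly between `i` and `j` in cyclic order (equivalently, one of them lies
strictly in the arc from `i` to `j` and the other strictly in the arc from `j`
to `i`). -/
def Crosses (d e : Sym2 (ZMod n)) : Prop :=
  ∃ i j k l : ZMod n, d = s(i, j) ∧ e = s(k, l) ∧ CcwBtw i k j ∧ CcwBtw j l i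

/-- A triangulation: `n - 3` pairwise non-crossing diagonals. -/
def IsTriangulation (τ : Finset (Sym2 (ZMod n))) : Prop :=
  τ.card = n - 3 ∧ (∀ d ∈ τ, IsDiag d) ∧ ∀ d ∈ τ, ∀ e ∈ τ, ¬ Crosses d e

/-- The length of the segment joining the two points indexed by `d`. -/
noncomputable def len (p : ZMod n → EuclideanSpace ℝ (Fin 2)) (d : Sym2 (ZMod n)) : ℝ :=
  Sym2.lift ⟨fun i j => ‖p i - p j‖, fun _ _ => norm_sub_rev _ _⟩ d

/-- `D(τ)`: the lengths of the diagonals of `τ` sorted in nondecreasing order. -/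
noncomputable def sortedLengths (p : ZMod n → EuclideanSpace ℝ (Fin 2))
    (τ : Finset (Sym2 (ZMod n))) : List ℝ :=
  (τ.val.map (len p)).sort (· ≤ ·)

/-- Lexicographic order on lists of reals. -/
def lexLE (l l' : List ℝ) : Prop := l = l' ∨ List.Lex (· < ·) l l'

/-- `τ` is length maximal: it is a triangulation whose sorted list of diagonal
lengths is greatest in the lexicographic order among all triangulations. -/
def LengthMaximal (p : ZMod n → EuclideanSpace ℝ (Fin 2))
    (τ : Finset (Sym2 (ZMod n))) : Prop :=
  IsTriangulation τ ∧
    ∀ τ' : Finset (Sym2 (ZMod n)), IsTriangulation τ' →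
      lexLE (sortedLengths p τ') (sortedLengths p τ)

/-- A side of a triangle of `τ`: a chord, or a diagonal belonging to `τ`. -/
def IsSide (τ : Finset (Sym2 (ZMod n))) (d : Sym2 (ZMod n)) : Prop :=
  IsChord d ∨ d ∈ τ

open scoped Classical in
/-- `A(τ)`: the `3(n-2)` angles of the triangles of `τ` sorted in nondecreasing
order.  Triangles are recorded as triples `a < b < c` (ordered by residue) all of
whose sides are chords or diagonals of `τ`, each contributing its three angles. -/
noncomputable def sortedAngles (p : ZMod n → EuclideanSpace ℝ (Fin 2))
    (τ : Finset (Sym2 (ZMod n))) : List ℝ :=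
  ((Finset.univ.filter fun x : ZMod n × ZMod n × ZMod n =>
      x.1.val < x.2.1.val ∧ x.2.1.val < x.2.2.val ∧
      IsSide τ s(x.1, x.2.1) ∧ IsSide τ s(x.2.1, x.2.2) ∧ IsSide τ s(x.1, x.2.2)).val.bind
    fun x =>
      {EuclideanGeometry.angle (p x.2.1) (p x.1) (p x.2.2),
       EuclideanGeometry.angle (p x.1) (p x.2.1) (p x.2.2),
       EuclideanGeometry.angle (p x.1) (p x.2.2) (p x.2.1)}).sort (· ≤ ·)

/-- `τ` is angle maximal: it is a triangulation whose sorted list of angles is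
greatest in the lexicographic order among all triangulations. -/
def AngleMaximal (p : ZMod n → EuclideanSpace ℝ (Fin 2))
    (τ : Finset (Sym2 (ZMod n))) : Prop :=
  IsTriangulation τ ∧
    ∀ τ' : Finset (Sym2 (ZMod n)), IsTriangulation τ' →
      lexLE (sortedAngles p τ') (sortedAngles p τ)

/-- The ear `e_i = {i-1, i+1}`. -/
def ear (i : ZMod n) : Sym2 (ZMod n) := s(i - 1, i + 1)

/-- `P` contains a symmetric quadruple: indices `i < j < k < l` with
`‖p i - p k‖ = ‖p j - p l‖`. -/
def HasSymQuad (p : ZMod n → EuclideanSpace ℝ (Fin 2)) : Prop :=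
  ∃ i j k l : ZMod n, i.val < j.val ∧ j.val < k.val ∧ k.val < l.val ∧
    ‖p i - p k‖ = ‖p j - p l‖

set_option linter.unusedSectionVars false

/-! ### Non-crossing families of intervals -/

/-- No two intervals `(x, y)` of the family `F` satisfy `x < x' < y < y'`. -/
def Noncr (F : Finset (ℕ × ℕ)) : Prop :=
  ∀ q ∈ F, ∀ r ∈ F, ¬ (q.1 < r.1 ∧ r.1 < q.2 ∧ q.2 < r.2)

/-- Under the interval `(i, j)` there is a last `v < j` such that `(i, v)` is in `F` or has
length one. -/
lemma exists_apex (F : Finset (ℕ × ℕ)) {i j : ℕ} (h : i + 2 ≤ j) :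
    ∃ v, i < v ∧ v < j ∧ (v = i + 1 ∨ (i, v) ∈ F) ∧ ∀ w, v < w → w < j → (i, w) ∉ F := by
  classical
  let P : ℕ → Prop := fun v => v = i + 1 ∨ (i, v) ∈ F
  have h1 : i + 1 ≤ Nat.findGreatest P (j - 1) :=
    Nat.le_findGreatest (by omega) (Or.inl rfl)
  have h2 : P (Nat.findGreatest P (j - 1)) :=
    Nat.findGreatest_spec (m := i + 1) (by omega) (Or.inl rfl)
  have h3 : Nat.findGreatest P (j - 1) ≤ j - 1 := Nat.findGreatest_le _
  refine ⟨_, by omega, by omega, h2, fun w hw hwj hm => ?_⟩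
  exact Nat.findGreatest_is_greatest hw (by omega) (Or.inr hm)

/-- The map sending an interval to the point `v` of `exists_apex` is injective on a non-crossing
family, and takes values in `{1, …, m - 1}`. -/
lemma Noncr.card_le {F : Finset (ℕ × ℕ)} {m : ℕ} (hF : Noncr F)
    (hb : ∀ q ∈ F, q.1 + 2 ≤ q.2 ∧ q.2 ≤ m) : F.card ≤ m - 1 := by
  have key : ∀ q : ℕ × ℕ, ∃ v, q ∈ F → q.1 < v ∧ v < q.2 ∧ (v = q.1 + 1 ∨ (q.1, v) ∈ F) ∧
      ∀ w, v < w → w < q.2 → (q.1, w) ∉ F := by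
    intro q
    by_cases hq : q ∈ F
    · obtain ⟨v, hv⟩ := exists_apex F (hb q hq).1
      exact ⟨v, fun _ => hv⟩
    · exact ⟨0, fun h => absurd h hq⟩
  choose f hf using key
  have hc : (Finset.Ioo 0 m).card = m - 1 := by simp
  rw [← hc]
  refine Finset.card_le_card_of_injOn f ?_ ?_
  · intro q hq
    have h1 := hf q hq
    have h2 := hb q hq
    simp only [Finset.coe_Ioo, Set.mem_Ioo]
    omega
  · -- Two distinct intervals with the same apex `v` are nested; the larger one then either
    -- crosses the smaller one through `(i, v)` or contradicts the choice of `v`.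
    have main : ∀ q ∈ F, ∀ r ∈ F, f q = f r → q.1 < r.1 ∨ (q.1 = r.1 ∧ r.2 < q.2) → False := by
      intro q hq r hr hqr hlt
      obtain ⟨a1, a2, a3, a4⟩ := hf q hq
      obtain ⟨b1, b2, b3, b4⟩ := hf r hr
      rcases hlt with hlt | ⟨he, hlt⟩
      · rcases a3 with a3 | a3
        · omega
        · exact hF _ a3 r hr ⟨hlt, by simp only; omega, by simp only; omega⟩
      · exact a4 r.2 (by omega) hlt (by rw [he]; exact hr)
    intro q hq r hr hqr
    rcases lt_trichotomy q.1 r.1 with h | h | h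
    · exact (main q hq r hr hqr (Or.inl h)).elim
    · rcases lt_trichotomy q.2 r.2 with h' | h' | h'
      · exact (main r hr q hq hqr.symm (Or.inr ⟨h.symm, h'⟩)).elim
      · exact Prod.ext h h'
      · exact (main q hq r hr hqr (Or.inr ⟨h, h'⟩)).elim
    · exact (main r hr q hq hqr.symm (Or.inl h)).elim

/-- A non-crossing family of maximal size contains every interval that crosses none of its
members. -/
lemma Noncr.mem_of_card {F : Finset (ℕ × ℕ)} {m : ℕ} (hF : Noncr F)
    (hb : ∀ q ∈ F, q.1 + 2 ≤ q.2 ∧ q.2 ≤ m) (hc : F.card = m - 1) {u v : ℕ}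
    (huv : u + 2 ≤ v) (hv : v ≤ m)
    (h : ∀ q ∈ F, ¬ (q.1 < u ∧ u < q.2 ∧ q.2 < v) ∧ ¬ (u < q.1 ∧ q.1 < v ∧ v < q.2)) :
    (u, v) ∈ F := by
  by_contra hn
  have h1 : Noncr (insert (u, v) F) := by
    intro q hq r hr
    rcases Finset.mem_insert.1 hq with rfl | hq <;> rcases Finset.mem_insert.1 hr with rfl | hr
    · simp
    · exact (h r hr).2
    · exact (h q hq).1
    · exact hF q hq r hr
  have h2 := h1.card_le (m := m) (by
    intro q hq
    rcases Finset.mem_insert.1 hq with rfl | hq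
    · exact ⟨huv, hv⟩
    · exact hb q hq)
  rw [Finset.card_insert_of_notMem hn] at h2
  omega

/-- In a non-crossing family of maximal size, every interval is the base of a triangle. -/
lemma Noncr.exists_triangle {F : Finset (ℕ × ℕ)} {m : ℕ} (hF : Noncr F)
    (hb : ∀ q ∈ F, q.1 + 2 ≤ q.2 ∧ q.2 ≤ m) (hc : F.card = m - 1) {i j : ℕ}
    (hij : (i, j) ∈ F) :
    ∃ v, i < v ∧ v < j ∧ (v = i + 1 ∨ (i, v) ∈ F) ∧ (v + 1 = j ∨ (v, j) ∈ F) := by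
  have h0 := hb _ hij
  simp only at h0
  obtain ⟨v, h1, h2, h3, h4⟩ := exists_apex F h0.1
  refine ⟨v, h1, h2, h3, or_iff_not_imp_left.2 fun h5 => ?_⟩
  refine hF.mem_of_card hb hc (by omega) h0.2 fun q hq => ⟨?_, ?_⟩
  · rintro ⟨k1, k2, k3⟩
    rcases lt_trichotomy q.1 i with k | k | k
    · exact hF q hq _ hij ⟨k, by simp only; omega, k3⟩
    · exact h4 q.2 k2 k3 (by rw [← k]; exact hq)
    · rcases h3 with h3 | h3
      · omega
      · exact hF _ h3 q hq ⟨k, k1, k2⟩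
  · rintro ⟨k1, k2, k3⟩
    exact hF _ hij q hq ⟨by simp only; omega, k2, k3⟩

/-- Descending through triangles, every interval of a maximal non-crossing family contains an
interval of length two of the family. The number `k` bounds `j - i` and drives the induction. -/
lemma Noncr.exists_ear {F : Finset (ℕ × ℕ)} {m : ℕ} (hF : Noncr F)
    (hb : ∀ q ∈ F, q.1 + 2 ≤ q.2 ∧ q.2 ≤ m) (hc : F.card = m - 1) (k : ℕ) :
    ∀ i j : ℕ, j ≤ i + k → (i, j) ∈ F → ∃ e, i ≤ e ∧ e + 2 ≤ j ∧ (e, e + 2) ∈ F := by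
  induction k with
  | zero =>
    intro i j h hm
    have := hb _ hm
    simp only at this
    omega
  | succ k ih =>
    intro i j h hm
    have h0 := hb _ hm
    simp only at h0
    obtain ⟨v, h1, h2, h3, h4⟩ := hF.exists_triangle hb hc hm
    rcases h3 with h3 | h3
    · rcases h4 with h4 | h4
      · obtain rfl : j = i + 2 := by omega
        exact ⟨i, le_rfl, le_rfl, hm⟩
      · obtain ⟨e, e1, e2, e3⟩ := ih v j (by omega) h4
        exact ⟨e, by omega, e2, e3⟩
    · obtain ⟨e, e1, e2, e3⟩ := ih i v (by omega) h3
      exact ⟨e, e1, by omega, e3⟩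

/-! ### Diagonals of the cyclic polygon in linear coordinates -/

lemma natCast_ne {x y : ℕ} (h : x < y) (h' : y < x + n) : (x : ZMod n) ≠ y := by
  intro he
  rw [ZMod.natCast_eq_natCast_iff] at he
  have := (Nat.modEq_iff_dvd' h.le).1 he
  exact absurd (Nat.le_of_dvd (by omega) this) (by omega)

/-- Residues of differences of points written in linear coordinates from `a`. -/
lemma val_sub_add {a : ZMod n} {x z : ℕ} (hx : x < n) (hz : z < n) :
    ((a + z) - (a + x)).val = if x ≤ z then z - x else z + n - x := by
  split_ifs with h
  · rw [← ZMod.val_natCast_of_lt (show z - x < n by omega), Nat.cast_sub h]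
    congr 1; ring
  · rw [← ZMod.val_natCast_of_lt (show z + n - x < n by omega), Nat.cast_sub (by omega)]
    congr 1; simp

/-- In linear coordinates from any vertex `a`, crossing means interleaving. -/
lemma crosses_iff {a : ZMod n} {x y z w : ℕ} (hxy : x < y) (hy : y < n) (hzw : z < w)
    (hw : w < n) : Crosses s(a + (x : ZMod n), a + (y : ZMod n)) s(a + (z : ZMod n), a + (w : ZMod n)) ↔
      (x < z ∧ z < y ∧ y < w) ∨ (z < x ∧ x < w ∧ w < y) := by
  have hx : x < n := by omega
  have hz : z < n := by omega
  constructor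
  · rintro ⟨i, j, k, l, h1, h2, h3, h4⟩
    rw [Sym2.eq_iff] at h1 h2
    rcases h1 with ⟨rfl, rfl⟩ | ⟨rfl, rfl⟩ <;> rcases h2 with ⟨rfl, rfl⟩ | ⟨rfl, rfl⟩ <;>
    · simp only [CcwBtw, val_sub_add, hx, hy, hz, hw] at h3 h4
      split_ifs at h3 h4 <;> omega
  · rintro (h | h)
    · refine ⟨_, _, _, _, rfl, rfl, ?_, ?_⟩ <;>
      · simp only [CcwBtw, val_sub_add, hx, hy, hz, hw]
        split_ifs <;> omega
    · refine ⟨_, _, _, _, rfl, Sym2.eq_swap, ?_, ?_⟩ <;>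
      · simp only [CcwBtw, val_sub_add, hx, hy, hz, hw]
        split_ifs <;> omega

lemma isDiag_of_lt {a : ZMod n} {x y : ℕ} (h : x + 2 ≤ y) (h' : y + 2 ≤ x + n) :
    IsDiag s(a + (x : ZMod n), a + (y : ZMod n)) := by
  refine ⟨_, _, rfl, fun he => ?_, fun he => ?_, fun he => ?_⟩
  · refine natCast_ne (n := n) (x := x) (y := y + 1) (by omega) (by omega) ?_
    push_cast
    linear_combination -he
  · refine natCast_ne (n := n) (x := x) (y := y) (by omega) (by omega) ?_
    linear_combination -he
  · refine natCast_ne (n := n) (x := x + 1) (y := y) (by omega) (by omega) ?_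
    push_cast
    linear_combination -he

lemma IsDiag.exists_coords {d : Sym2 (ZMod n)} (hd : IsDiag d) (a : ZMod n) :
    ∃ x y : ℕ, x + 2 ≤ y ∧ y < n ∧ y + 2 ≤ x + n ∧ d = s(a + x, a + y) := by
  obtain ⟨i, j, rfl, h1, h2, h3⟩ := hd
  have hi : i = a + ((i - a).val : ℕ) := by simp
  have hj : j = a + ((j - a).val : ℕ) := by simp
  have hin := ZMod.val_lt (i - a)
  have hjn := ZMod.val_lt (j - a)
  generalize (i - a).val = x at *
  generalize (j - a).val = y at *
  subst hi hj
  have k2 : y ≠ x := by rintro rfl; exact h2 rfl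
  have k3 : y ≠ x + 1 := by rintro rfl; apply h3; push_cast; ring
  have k1 : x ≠ y + 1 := by rintro rfl; apply h1; push_cast; ring
  have k4 : y + 1 ≠ x + n := by
    intro h; apply h1
    have := congrArg (Nat.cast (R := ZMod n)) h
    push_cast at this
    rw [ZMod.natCast_self] at this
    linear_combination this
  have k5 : x + 1 ≠ y + n := by
    intro h; apply h3
    have := congrArg (Nat.cast (R := ZMod n)) h
    push_cast at this
    rw [ZMod.natCast_self] at this
    linear_combination -this
  rcases lt_or_gt_of_ne k2 with h | h
  · exact ⟨y, x, by omega, hin, by omega, Sym2.eq_swap⟩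
  · exact ⟨x, y, by omega, hjn, by omega, rfl⟩

lemma coords_inj {a : ZMod n} {x y z w : ℕ} (hxy : x < y) (hy : y < n) (hzw : z < w)
    (hw : w < n) (h : s(a + x, a + y) = s(a + z, a + w)) : x = z ∧ y = w := by
  have key : ∀ u v : ℕ, u < n → v < n → a + (u : ZMod n) = a + v → u = v := by
    intro u v hu hv he
    have he' := add_left_cancel he
    rcases lt_trichotomy u v with h | h | h
    · exact absurd he' (natCast_ne h (by omega))
    · exact h
    · exact absurd he'.symm (natCast_ne h (by omega))
  rw [Sym2.eq_iff] at h
  rcases h with ⟨h1, h2⟩ | ⟨h1, h2⟩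
  · exact ⟨key _ _ (by omega) (by omega) h1, key _ _ (by omega) (by omega) h2⟩
  · have := key _ _ (by omega) (by omega) h1
    have := key _ _ (by omega) (by omega) h2
    omega

/-- The pairs of `τ`, cut open at the vertex `a`: the intervals `(x, y)`, `x < y < n`, such
that `{a + x, a + y}` belongs to `τ`. -/
def cut (τ : Finset (Sym2 (ZMod n))) (a : ZMod n) : Finset (ℕ × ℕ) :=
  (Finset.range n ×ˢ Finset.range n).filter fun q => q.1 < q.2 ∧ s(a + q.1, a + q.2) ∈ τ

lemma mem_cut {τ : Finset (Sym2 (ZMod n))} {a : ZMod n} {x y : ℕ} :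
    (x, y) ∈ cut τ a ↔ x < y ∧ y < n ∧ s(a + x, a + y) ∈ τ := by
  simp only [cut, Finset.mem_filter, Finset.mem_product, Finset.mem_range]
  constructor
  · rintro ⟨⟨-, h1⟩, h2, h3⟩; exact ⟨h2, h1, h3⟩
  · rintro ⟨h1, h2, h3⟩; exact ⟨⟨by omega, h2⟩, h1, h3⟩

lemma IsTriangulation.cut_bounds {τ : Finset (Sym2 (ZMod n))} (hτ : IsTriangulation τ)
    {a : ZMod n} {x y : ℕ} (h : (x, y) ∈ cut τ a) : x + 2 ≤ y ∧ y < n ∧ y + 2 ≤ x + n := by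
  obtain ⟨h1, h2, h3⟩ := mem_cut.1 h
  obtain ⟨x', y', k1, k2, k3, k4⟩ := (hτ.2.1 _ h3).exists_coords a
  obtain ⟨rfl, rfl⟩ := coords_inj h1 h2 (by omega) k2 k4
  exact ⟨k1, k2, k3⟩

lemma IsTriangulation.card_cut {τ : Finset (Sym2 (ZMod n))} (hτ : IsTriangulation τ)
    (a : ZMod n) : (cut τ a).card = n - 3 := by
  rw [← hτ.1]
  refine Finset.card_bij (fun q _ => s(a + (q.1 : ZMod n), a + (q.2 : ZMod n))) ?_ ?_ ?_
  · rintro ⟨x, y⟩ h; exact (mem_cut.1 h).2.2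
  · rintro ⟨x, y⟩ h ⟨z, w⟩ h' he
    obtain ⟨h1, h2, h3⟩ := mem_cut.1 h
    obtain ⟨k1, k2, k3⟩ := mem_cut.1 h'
    obtain ⟨rfl, rfl⟩ := coords_inj h1 h2 k1 k2 he
    rfl
  · intro d hd
    obtain ⟨x, y, k1, k2, k3, rfl⟩ := (hτ.2.1 _ hd).exists_coords a
    exact ⟨(x, y), mem_cut.2 ⟨by omega, k2, hd⟩, rfl⟩

/-- Together with the chord `(0, n - 1)`, the intervals of a triangulation form a non-crossing
family of maximal size. -/
lemma IsTriangulation.cut_props {τ : Finset (Sym2 (ZMod n))} (hn : 5 ≤ n)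
    (hτ : IsTriangulation τ) (a : ZMod n) :
    Noncr (insert (0, n - 1) (cut τ a)) ∧
    (∀ q ∈ insert (0, n - 1) (cut τ a), q.1 + 2 ≤ q.2 ∧ q.2 ≤ n - 1) ∧
    (insert (0, n - 1) (cut τ a)).card = n - 1 - 1 := by
  have hb : ∀ q ∈ cut τ a, q.1 + 2 ≤ q.2 ∧ q.2 < n ∧ q.2 + 2 ≤ q.1 + n :=
    fun q hq => hτ.cut_bounds (x := q.1) (y := q.2) hq
  refine ⟨?_, ?_, ?_⟩
  · intro q hq r hr
    rcases Finset.mem_insert.1 hq with rfl | hq <;> rcases Finset.mem_insert.1 hr with rfl | hr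
    · simp
    · have := hb r hr
      simp only
      omega
    · simp
    · intro h
      obtain ⟨h1, h2, h3⟩ := mem_cut.1 hq
      obtain ⟨k1, k2, k3⟩ := mem_cut.1 hr
      exact hτ.2.2 _ h3 _ k3 ((crosses_iff h1 h2 k1 k2).2 (Or.inl h))
  · intro q hq
    rcases Finset.mem_insert.1 hq with rfl | hq
    · simp only; omega
    · have := hb q hq
      omega
  · rw [Finset.card_insert_of_notMem, hτ.card_cut a]
    · omega
    · intro h
      have := hb _ h
      simp only at this
      omega

/-! ### Ears -/

/-- The starting points `b` of the ears `{b, b + 2}` belonging to `τ`. -/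
def earStarts (τ : Finset (Sym2 (ZMod n))) : Finset (ZMod n) :=
  Finset.univ.filter fun b => s(b, b + 2) ∈ τ

lemma mem_earStarts {τ : Finset (Sym2 (ZMod n))} {b : ZMod n} :
    b ∈ earStarts τ ↔ s(b, b + 2) ∈ τ := by
  simp [earStarts]

/-- Every arc cut off by a diagonal of `τ` contains an ear of `τ`. -/
lemma IsTriangulation.exists_ear {τ : Finset (Sym2 (ZMod n))} (hn : 5 ≤ n)
    (hτ : IsTriangulation τ) {a : ZMod n} {x y : ℕ} (h : (x, y) ∈ cut τ a) :
    ∃ e, x ≤ e ∧ e + 2 ≤ y ∧ a + (e : ZMod n) ∈ earStarts τ := by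
  obtain ⟨h1, h2, h3⟩ := hτ.cut_props hn a
  have hxy := hτ.cut_bounds h
  obtain ⟨e, e1, e2, e3⟩ := h1.exists_ear h2 h3 y x y (by omega) (Finset.mem_insert_of_mem h)
  refine ⟨e, e1, e2, ?_⟩
  rcases Finset.mem_insert.1 e3 with e3 | e3
  · simp only [Prod.mk.injEq] at e3; omega
  · have := (mem_cut.1 e3).2.2
    rw [mem_earStarts]
    convert this using 2
    push_cast; ring

/-- If `τ` has at most two ears, the triangle below a diagonal `{a, a + k}` has one of its other
two sides on the boundary: otherwise both of these sides and the other side of `{a, a + k}` would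
each cut off an ear. -/
lemma IsTriangulation.step_down {τ : Finset (Sym2 (ZMod n))} (hn : 5 ≤ n)
    (hτ : IsTriangulation τ) (hE : (earStarts τ).card ≤ 2) {a : ZMod n} {k : ℕ} (hk : 3 ≤ k)
    (hkn : k + 2 ≤ n) (h : s(a, a + k) ∈ τ) :
    s(a, a + (k - 1 : ℕ)) ∈ τ ∨ s(a + 1, a + k) ∈ τ := by
  obtain ⟨h1, h2, h3⟩ := hτ.cut_props hn a
  have hm : (0, k) ∈ cut τ a := mem_cut.2 ⟨by omega, by omega, by simpa using h⟩
  obtain ⟨v, v1, v2, v3, v4⟩ := h1.exists_triangle h2 h3 (Finset.mem_insert_of_mem hm)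
  have w3 : v = 0 + 1 ∨ (0, v) ∈ cut τ a := by
    refine v3.imp_right fun v3 => (Finset.mem_insert.1 v3).resolve_left ?_
    simp only [Prod.mk.injEq]; omega
  have w4 : v + 1 = k ∨ (v, k) ∈ cut τ a := by
    refine v4.imp_right fun v4 => (Finset.mem_insert.1 v4).resolve_left ?_
    simp only [Prod.mk.injEq]; omega
  rcases w4 with w4 | w4
  · rcases w3 with w3 | w3
    · omega
    · left
      have := (mem_cut.1 w3).2.2
      obtain rfl : v = k - 1 := by omega
      simpa using this
  · rcases w3 with rfl | w3
    · right
      simpa using (mem_cut.1 w4).2.2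
    · exfalso
      obtain ⟨e, e1, e2, e3⟩ := hτ.exists_ear hn w3
      obtain ⟨f, f1, f2, f3⟩ := hτ.exists_ear hn w4
      have hm' : (0, n - k) ∈ cut τ (a + k) := by
        refine mem_cut.2 ⟨by omega, by omega, ?_⟩
        rw [Sym2.eq_swap, Nat.cast_sub (by omega)]
        simpa using h
      obtain ⟨g, g1, g2, g3⟩ := hτ.exists_ear hn hm'
      rw [add_assoc, ← Nat.cast_add] at g3
      have : 2 < (earStarts τ).card := by
        rw [Finset.two_lt_card]
        refine ⟨_, e3, _, f3, _, g3, ?_, ?_, ?_⟩ <;>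
        · rw [Ne, add_right_inj]
          exact natCast_ne (by omega) (by omega)
      omega

/-- `IsTriangulation.step_down`, applied to the complementary arc of `{a, a + k}`. -/
lemma IsTriangulation.step_up {τ : Finset (Sym2 (ZMod n))} (hn : 5 ≤ n)
    (hτ : IsTriangulation τ) (hE : (earStarts τ).card ≤ 2) {a : ZMod n} {k : ℕ} (hk : 2 ≤ k)
    (hkn : k + 3 ≤ n) (h : s(a, a + k) ∈ τ) :
    s(a, a + (k + 1 : ℕ)) ∈ τ ∨ s(a - 1, a - 1 + (k + 1 : ℕ)) ∈ τ := by
  have h' : s(a + k, a + k + (n - k : ℕ)) ∈ τ := by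
    rw [Sym2.eq_swap, Nat.cast_sub (by omega)]
    simpa using h
  rcases hτ.step_down hn hE (by omega) (by omega) h' with h1 | h1
  · right
    rw [Sym2.eq_swap] at h1
    convert h1 using 2
    · rw [Nat.cast_sub (by omega), Nat.cast_sub (by omega), ZMod.natCast_self]
      push_cast; ring
    · push_cast; ring
  · left
    rw [Sym2.eq_swap] at h1
    convert h1 using 2
    · rw [Nat.cast_sub (by omega), ZMod.natCast_self]
      ring
    · push_cast; ring

/-! ### Triangulations with two ears -/

/-- The number of elements of `S` below `i`. -/
def lefts (S : Finset ℕ) (i : ℕ) : ℕ := (S.filter (· < i)).card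

lemma lefts_zero (S : Finset ℕ) : lefts S 0 = 0 := by simp [lefts]

lemma lefts_succ (S : Finset ℕ) (i : ℕ) :
    lefts S (i + 1) = lefts S i + if i ∈ S then 1 else 0 := by
  unfold lefts
  split_ifs with h
  · rw [← Finset.card_insert_of_notMem (a := i) (by simp)]
    congr 1
    ext x
    simp only [Finset.mem_filter, Finset.mem_insert]
    constructor
    · rintro ⟨h1, h2⟩
      rcases Nat.lt_succ_iff_lt_or_eq.1 h2 with h3 | h3
      · exact Or.inr ⟨h1, h3⟩
      · exact Or.inl h3
    · rintro (rfl | ⟨h1, h2⟩)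
      · exact ⟨h, by omega⟩
      · exact ⟨h1, by omega⟩
  · rw [add_zero]
    congr 1
    refine Finset.filter_congr fun x hx => ?_
    have : x ≠ i := by rintro rfl; exact h hx
    omega

lemma lefts_mono (S : Finset ℕ) (i k : ℕ) :
    lefts S i ≤ lefts S (i + k) ∧ lefts S (i + k) ≤ lefts S i + k := by
  induction k with
  | zero => simp
  | succ k ih =>
    rw [← add_assoc, lefts_succ]
    split_ifs <;> omega

/-- The `i`-th diagonal of the triangulation encoded by `b` and `S`: an arc of `i + 2` edges,
obtained from the ear `{b, b + 2}` by adding one edge at a time, on the left at the steps in `S`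
and on the right at the others. -/
def arc (b : ZMod n) (S : Finset ℕ) (i : ℕ) : Sym2 (ZMod n) :=
  s(b - lefts S i, b - lefts S i + (i + 2 : ℕ))

/-- The triangulation with two ears encoded by `b` and `S ⊆ {0, …, n - 5}`. -/
def snake (b : ZMod n) (S : Finset ℕ) : Finset (Sym2 (ZMod n)) :=
  (Finset.range (n - 3)).image (arc b S)

/-- The arcs of a snake, seen from the left end of the last one, are nested intervals contained
in `{0, …, n - 2}`. -/
lemma arc_coords (b : ZMod n) (S : Finset ℕ) {i : ℕ} (hi : i < n - 3) :
    arc b S i = s(b - lefts S (n - 4) + (lefts S (n - 4) - lefts S i : ℕ),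
      b - lefts S (n - 4) + (lefts S (n - 4) - lefts S i + (i + 2) : ℕ)) := by
  have h := (lefts_mono S i (n - 4 - i)).1
  rw [show i + (n - 4 - i) = n - 4 by omega] at h
  rw [arc]
  congr 1 <;> push_cast [Nat.cast_sub h] <;> ring

lemma arc_injOn (hn : 5 ≤ n) (b : ZMod n) (S : Finset ℕ) :
    Set.InjOn (arc b S) (Finset.range (n - 3)) := by
  intro i hi j hj h
  simp only [Finset.coe_range, Set.mem_Iio] at hi hj
  rw [arc_coords b S hi, arc_coords b S hj] at h
  have h1 := lefts_mono S i (n - 4 - i)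
  have h2 := lefts_mono S j (n - 4 - j)
  rw [show i + (n - 4 - i) = n - 4 by omega] at h1
  rw [show j + (n - 4 - j) = n - 4 by omega] at h2
  have := coords_inj (by omega) (by omega) (by omega) (by omega) h
  omega

lemma snake_isTriangulation (hn : 5 ≤ n) (b : ZMod n) (S : Finset ℕ) :
    IsTriangulation (snake b S) := by
  refine ⟨?_, ?_, ?_⟩
  · rw [snake, Finset.card_image_of_injOn (arc_injOn hn b S), Finset.card_range]
  · intro d hd
    obtain ⟨i, hi, rfl⟩ := Finset.mem_image.1 hd
    rw [Finset.mem_range] at hi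
    rw [arc_coords b S hi]
    exact isDiag_of_lt (by omega) (by omega)
  · intro d hd e he
    obtain ⟨i, hi, rfl⟩ := Finset.mem_image.1 hd
    obtain ⟨j, hj, rfl⟩ := Finset.mem_image.1 he
    rw [Finset.mem_range] at hi hj
    have h1 := lefts_mono S i (n - 4 - i)
    have h2 := lefts_mono S j (n - 4 - j)
    rw [show i + (n - 4 - i) = n - 4 by omega] at h1
    rw [show j + (n - 4 - j) = n - 4 by omega] at h2
    rw [arc_coords b S hi, arc_coords b S hj,
      crosses_iff (by omega) (by omega) (by omega) (by omega)]
    rcases le_total i j with hij | hij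
    · have h3 := lefts_mono S i (j - i)
      rw [show i + (j - i) = j by omega] at h3
      omega
    · have h3 := lefts_mono S j (i - j)
      rw [show j + (i - j) = i by omega] at h3
      omega

/-- A snake has exactly two ears: its first arc and the complement of its last one. -/
lemma earStarts_snake (hn : 5 ≤ n) (b : ZMod n) (S : Finset ℕ) :
    earStarts (snake b S) = {b, b - lefts S (n - 4) - 2} := by
  ext b'
  rw [mem_earStarts, snake, Finset.mem_image]
  simp only [Finset.mem_insert, Finset.mem_singleton, Finset.mem_range]
  constructor
  · rintro ⟨i, hi, h⟩
    rw [arc, Sym2.eq_iff] at h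
    rcases h with ⟨h1, h2⟩ | ⟨h1, h2⟩
    · have h3 : ((i + 2 : ℕ) : ZMod n) = (2 : ℕ) := by
        push_cast at h2 ⊢
        linear_combination h2 - h1
      rcases Nat.eq_zero_or_pos i with rfl | h0
      · left
        rw [← h1, lefts_zero]; simp
      · exact absurd h3.symm (natCast_ne (by omega) (by omega))
    · have h3 : ((i + 4 : ℕ) : ZMod n) = (0 : ℕ) := by
        push_cast at h2 ⊢
        linear_combination h2 - h1
      rcases eq_or_ne i (n - 4) with rfl | h0
      · right
        linear_combination -h1
      · exact absurd h3.symm (natCast_ne (by omega) (by omega))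
  · rintro (rfl | rfl)
    · exact ⟨0, by omega, by simp [arc, lefts_zero]⟩
    · refine ⟨n - 4, by omega, ?_⟩
      rw [arc, Sym2.eq_swap, show n - 4 + 2 = n - 2 by omega, Nat.cast_sub (by omega)]
      congr 1
      · simp; ring
      · simp

lemma card_earStarts_snake (hn : 5 ≤ n) (b : ZMod n) (S : Finset ℕ) :
    (earStarts (snake b S)).card = 2 := by
  rw [earStarts_snake hn, Finset.card_pair]
  intro h
  have h1 := (lefts_mono S 0 (n - 4)).2
  rw [lefts_zero] at h1
  simp only [zero_add] at h1
  refine natCast_ne (n := n) (x := 0) (y := lefts S (n - 4) + 2) (by omega) (by omega) ?_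
  push_cast
  linear_combination -h

/-- The two ways of extending an arc by one edge give crossing diagonals. -/
lemma snake_step {b : ZMod n} (hn : 5 ≤ n) {S S' : Finset ℕ} (h : snake b S = snake b S') {i : ℕ}
    (hi : i < n - 4) (hl : lefts S i = lefts S' i) (h1 : i ∈ S) : i ∈ S' := by
  by_contra h2
  have m1 : arc b S (i + 1) ∈ snake b S :=
    Finset.mem_image_of_mem _ (Finset.mem_range.2 (by omega))
  have m2 : arc b S' (i + 1) ∈ snake b S := by
    rw [h]; exact Finset.mem_image_of_mem _ (Finset.mem_range.2 (by omega))
  have e1 : arc b S (i + 1) = s(b - lefts S i - 1 + (0 : ℕ), b - lefts S i - 1 + (i + 3 : ℕ)) := by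
    rw [arc, lefts_succ, if_pos h1]
    congr 1 <;> push_cast <;> ring
  have e2 : arc b S' (i + 1) = s(b - lefts S i - 1 + (1 : ℕ), b - lefts S i - 1 + (i + 4 : ℕ)) := by
    rw [arc, lefts_succ, if_neg h2, hl]
    congr 1 <;> push_cast <;> ring
  refine (snake_isTriangulation hn b S).2.2 _ m1 _ m2 ?_
  rw [e1, e2, crosses_iff (by omega) (by omega) (by omega) (by omega)]
  omega

/-- Given the starting ear, the snake determines its sequence of left and right steps. -/
lemma snake_inj {b : ZMod n} (hn : 5 ≤ n) {S S' : Finset ℕ} (hS : S ⊆ Finset.range (n - 4))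
    (hS' : S' ⊆ Finset.range (n - 4)) (h : snake b S = snake b S') : S = S' := by
  have key : ∀ i, i ≤ n - 4 → lefts S i = lefts S' i := by
    intro i
    induction i with
    | zero => intro _; rw [lefts_zero, lefts_zero]
    | succ i ih =>
      intro hi
      have := ih (by omega)
      have : i ∈ S ↔ i ∈ S' :=
        ⟨snake_step hn h (by omega) this, snake_step hn h.symm (by omega) this.symm⟩
      simp only [lefts_succ, this, ih (by omega)]
  ext i
  constructor
  · intro hi
    have := Finset.mem_range.1 (hS hi)
    exact snake_step hn h this (key i (by omega)) hi
  · intro hi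
    have := Finset.mem_range.1 (hS' hi)
    exact snake_step hn h.symm this (key i (by omega)).symm hi

lemma lefts_insert {S : Finset ℕ} {i j : ℕ} (h : j ≤ i) : lefts (insert i S) j = lefts S j := by
  unfold lefts
  rw [Finset.filter_insert, if_neg (by omega)]

/-- A triangulation with at most two ears is the snake grown from any of its ears. -/
lemma IsTriangulation.eq_snake {τ : Finset (Sym2 (ZMod n))} (hn : 5 ≤ n)
    (hτ : IsTriangulation τ) (hE : (earStarts τ).card ≤ 2) {b : ZMod n} (hb : b ∈ earStarts τ) :
    ∃ S ⊆ Finset.range (n - 4), snake b S = τ := by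
  have key : ∀ i, i ≤ n - 4 → ∃ S ⊆ Finset.range i, ∀ j ≤ i, arc b S j ∈ τ := by
    intro i
    induction i with
    | zero =>
      intro _
      refine ⟨∅, by simp, fun j hj => ?_⟩
      obtain rfl : j = 0 := by omega
      simpa [arc, lefts_zero] using mem_earStarts.1 hb
    | succ i ih =>
      intro hi
      obtain ⟨S, hS, hS'⟩ := ih (by omega)
      have hiS : i ∉ S := fun h => by simpa using hS h
      have hS2 : S ⊆ Finset.range (i + 1) := hS.trans (Finset.range_mono (by omega))
      rcases hτ.step_up hn hE (by omega) (by omega) (hS' i le_rfl) with h | h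
      · refine ⟨S, hS2, fun j hj => ?_⟩
        rcases Nat.le_succ_iff.1 hj with hj | rfl
        · exact hS' j hj
        · rw [arc, lefts_succ, if_neg hiS]
          exact h
      · refine ⟨insert i S, Finset.insert_subset (by simp) hS2, fun j hj => ?_⟩
        rcases Nat.le_succ_iff.1 hj with hj | rfl
        · rw [arc, lefts_insert hj]
          exact hS' j hj
        · rw [arc, lefts_succ, if_pos (by simp), lefts_insert le_rfl]
          convert h using 2 <;> push_cast <;> ring
  obtain ⟨S, hS, hS'⟩ := key (n - 4) le_rfl
  refine ⟨S, hS, Finset.eq_of_subset_of_card_le ?_ ?_⟩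
  · intro d hd
    obtain ⟨i, hi, rfl⟩ := Finset.mem_image.1 hd
    rw [Finset.mem_range] at hi
    exact hS' i (by omega)
  · rw [hτ.1, (snake_isTriangulation hn b S).1]

lemma IsTriangulation.earStarts_nonempty {τ : Finset (Sym2 (ZMod n))} (hn : 5 ≤ n)
    (hτ : IsTriangulation τ) : (earStarts τ).Nonempty := by
  have h : (cut τ 0).Nonempty := by
    rw [← Finset.card_pos, hτ.card_cut]; omega
  obtain ⟨⟨x, y⟩, hxy⟩ := h
  obtain ⟨e, -, -, he⟩ := hτ.exists_ear hn hxy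
  exact ⟨_, he⟩

open scoped Classical in
/-- Each triangulation with at most two ears is encoded once by each of its two ears. -/
lemma card_twoEared (hn : 5 ≤ n) :
    (Finset.univ.filter fun τ : Finset (Sym2 (ZMod n)) =>
      IsTriangulation τ ∧ (earStarts τ).card ≤ 2).card = n * 2 ^ (n - 5) := by
  set A := Finset.univ.filter fun τ : Finset (Sym2 (ZMod n)) =>
      IsTriangulation τ ∧ (earStarts τ).card ≤ 2 with hA
  have h1 : (A.sigma fun τ => earStarts τ).card = A.card * 2 := by
    rw [Finset.card_sigma, Finset.sum_const_nat]
    intro τ hτ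
    obtain ⟨-, hT, hE⟩ := Finset.mem_filter.1 hτ
    obtain ⟨b, hb⟩ := hT.earStarts_nonempty hn
    obtain ⟨S, -, rfl⟩ := hT.eq_snake hn hE hb
    exact card_earStarts_snake hn b S
  have h2 : ((Finset.univ : Finset (ZMod n)) ×ˢ (Finset.range (n - 4)).powerset).card =
      (A.sigma fun τ => earStarts τ).card := by
    refine Finset.card_bij (fun q _ => ⟨snake q.1 q.2, q.1⟩) ?_ ?_ ?_
    · rintro ⟨b, S⟩ -
      rw [Finset.mem_sigma, hA, Finset.mem_filter]
      refine ⟨⟨Finset.mem_univ _, snake_isTriangulation hn b S,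
        (card_earStarts_snake hn b S).le⟩, ?_⟩
      simp [earStarts_snake hn]
    · rintro ⟨b, S⟩ hS ⟨b', S'⟩ hS' h
      simp only [Finset.mem_product, Finset.mem_powerset] at hS hS'
      simp only [Sigma.mk.injEq, heq_eq_eq] at h
      obtain ⟨h, rfl⟩ := h
      rw [snake_inj hn hS.2 hS'.2 h]
    · rintro ⟨τ, b⟩ h
      obtain ⟨hτ, hb⟩ := Finset.mem_sigma.1 h
      obtain ⟨-, hT, hE⟩ := Finset.mem_filter.1 hτ
      obtain ⟨S, hS, h⟩ := hT.eq_snake hn hE hb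
      exact ⟨(b, S), by simp [hS], by simp only at h ⊢; rw [h]⟩
  rw [h1, Finset.card_product, Finset.card_powerset, Finset.card_range, Finset.card_univ,
    ZMod.card] at h2
  have h3 : 2 ^ (n - 4) = 2 ^ (n - 5) * 2 := by
    rw [← pow_succ]; congr 1; omega
  rw [h3, ← mul_assoc] at h2
  omega

/-! ### Lengths -/

lemma norm_pt_sub (α β : ℝ) : ‖pt α - pt β‖ = 2 * |Real.sin ((α - β) / 2)| := by
  rw [EuclideanSpace.norm_eq, Fin.sum_univ_two]
  have h : ‖(pt α - pt β) 0‖ ^ 2 + ‖(pt α - pt β) 1‖ ^ 2 =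
      (2 * |Real.sin ((α - β) / 2)|) ^ 2 := by
    simp only [pt, PiLp.sub_apply, Real.norm_eq_abs, sq_abs, mul_pow]
    simp only [WithLp.equiv_symm_apply, Matrix.cons_val_zero, Matrix.cons_val_one]
    rw [Real.cos_sub_cos, Real.sin_sub_sin]
    linear_combination 4 * Real.sin ((α - β) / 2) ^ 2 * Real.sin_sq_add_cos_sq ((α + β) / 2)
  rw [h, Real.sqrt_sq (by positivity)]

/-- The length of a chord of the unit circle spanning `k` sides of the regular `n`-gon. -/
noncomputable def chordLen (n k : ℕ) : ℝ := 2 * |Real.sin (Real.pi * k / n)|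

lemma len_eq {p : ZMod n → EuclideanSpace ℝ (Fin 2)}
    (hp : ∀ i : ZMod n, p i = pt (2 * Real.pi * i.val / n)) (hn : 5 ≤ n) (a : ZMod n) (k : ℕ) :
    len p s(a, a + k) = chordLen n k := by
  have hn0 : (n : ℝ) ≠ 0 := by positivity
  have h : (((a + k).val : ℕ) : ℝ) = a.val + k - n * ((a.val + k) / n : ℕ) := by
    have h1 : (a + k).val = (a.val + k) % n := by
      rw [ZMod.val_add, ZMod.val_natCast, Nat.add_mod_mod]
    have h2 := Nat.mod_add_div (a.val + k) n
    rw [← h1] at h2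
    have h3 := congrArg (Nat.cast (R := ℝ)) h2
    push_cast at h3
    linarith
  rw [len, Sym2.lift_mk]
  simp only
  rw [norm_sub_rev, hp, hp, norm_pt_sub, h, chordLen, ← abs_neg (Real.sin (Real.pi * k / n))]
  have : (2 * Real.pi * (a.val + k - n * ((a.val + k) / n : ℕ)) / n -
      2 * Real.pi * a.val / n) / 2 = Real.pi * k / n - ((a.val + k) / n : ℕ) * Real.pi := by
    field_simp
    ring
  rw [this, Real.sin_sub_nat_mul_pi, abs_mul, abs_neg, abs_pow, abs_neg, abs_one, one_pow, one_mul]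

lemma chordLen_sub {k : ℕ} (hn : 5 ≤ n) (hk : k ≤ n) : chordLen n (n - k) = chordLen n k := by
  have hn0 : (n : ℝ) ≠ 0 := by positivity
  rw [chordLen, chordLen, Nat.cast_sub hk,
    show Real.pi * ((n : ℝ) - k) / n = Real.pi - Real.pi * k / n by field_simp, Real.sin_pi_sub]

lemma chordLen_lt {k : ℕ} (h : 3 ≤ k) (hk : k + 3 ≤ n) : chordLen n 2 < chordLen n k := by
  have hn0 : (0 : ℝ) < n := by have : 0 < n := by omega
                               exact_mod_cast this
  have h' : (3 : ℝ) ≤ k := by exact_mod_cast h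
  have hk' : (k : ℝ) + 3 ≤ n := by exact_mod_cast hk
  have hpi := Real.pi_pos
  have pos : ∀ x : ℝ, 0 < x → x < n → 0 < Real.sin (Real.pi * x / n) := by
    intro x hx hxn
    apply Real.sin_pos_of_pos_of_lt_pi (by positivity)
    rw [div_lt_iff₀ hn0]
    exact mul_lt_mul_of_pos_left hxn hpi
  rw [chordLen, chordLen, Nat.cast_ofNat, abs_of_pos (pos 2 (by norm_num) (by linarith)),
    abs_of_pos (pos k (by linarith) (by linarith)), ← sub_pos, ← mul_sub, Real.sin_sub_sin]
  have h1 : 0 < Real.sin ((Real.pi * k / n - Real.pi * 2 / n) / 2) := by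
    have := pos ((k - 2) / 2) (by linarith) (by linarith)
    convert this using 2
    ring
  have h2 : 0 < Real.cos ((Real.pi * k / n + Real.pi * 2 / n) / 2) := by
    apply Real.cos_pos_of_mem_Ioo
    constructor
    · have : 0 < (Real.pi * k / n + Real.pi * 2 / n) / 2 := by positivity
      linarith
    · rw [← add_div, ← mul_add, div_lt_div_iff_of_pos_right (by norm_num), div_lt_iff₀ hn0]
      exact mul_lt_mul_of_pos_left (by linarith) hpi
  positivity

lemma chordLen_le {k : ℕ} (hn : 5 ≤ n) (h : 2 ≤ k) (hk : k + 2 ≤ n) :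
    chordLen n 2 ≤ chordLen n k := by
  rcases eq_or_ne k 2 with rfl | h2
  · exact le_rfl
  · rcases eq_or_ne (k + 2) n with h3 | h3
    · obtain rfl : k = n - 2 := by omega
      rw [chordLen_sub hn (by omega)]
    · exact (chordLen_lt (by omega) (by omega)).le

lemma IsDiag.len_ge {p : ZMod n → EuclideanSpace ℝ (Fin 2)}
    (hp : ∀ i : ZMod n, p i = pt (2 * Real.pi * i.val / n)) (hn : 5 ≤ n) {d : Sym2 (ZMod n)}
    (hd : IsDiag d) : chordLen n 2 ≤ len p d := by
  obtain ⟨x, y, h1, h2, h3, rfl⟩ := hd.exists_coords 0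
  obtain ⟨k, rfl⟩ := Nat.exists_eq_add_of_le (show x ≤ y by omega)
  rw [Nat.cast_add, ← add_assoc, len_eq hp hn]
  exact chordLen_le hn (by omega) (by omega)

/-- All snakes have the same multiset of lengths. -/
lemma map_len_snake {p : ZMod n → EuclideanSpace ℝ (Fin 2)}
    (hp : ∀ i : ZMod n, p i = pt (2 * Real.pi * i.val / n)) (hn : 5 ≤ n) (b : ZMod n)
    (S : Finset ℕ) :
    (snake b S).val.map (len p) = (Finset.range (n - 3)).val.map fun i => chordLen n (i + 2) := by
  rw [snake, Finset.image_val_of_injOn (arc_injOn hn b S), Multiset.map_map]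
  refine Multiset.map_congr rfl fun i _ => ?_
  exact len_eq hp hn _ _

/-- A snake has at most two diagonals of minimal length: the lengths of the arcs spanning between
`3` and `n - 3` sides are strictly larger. -/
lemma count_snake {p : ZMod n → EuclideanSpace ℝ (Fin 2)}
    (hp : ∀ i : ZMod n, p i = pt (2 * Real.pi * i.val / n)) (hn : 5 ≤ n) (b : ZMod n)
    (S : Finset ℕ) : ((snake b S).val.map (len p)).count (chordLen n 2) ≤ 2 := by
  rw [map_len_snake hp hn, Multiset.count_map, ← Finset.filter_val]
  refine le_trans (Finset.card_le_card (t := {0, n - 4}) ?_) Finset.card_le_two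
  intro i hi
  rw [Finset.mem_filter, Finset.mem_range] at hi
  simp only [Finset.mem_insert, Finset.mem_singleton]
  by_contra h
  exact (chordLen_lt (n := n) (k := i + 2) (by omega) (by omega)).ne hi.2

lemma card_earStarts_le_count {p : ZMod n → EuclideanSpace ℝ (Fin 2)}
    (hp : ∀ i : ZMod n, p i = pt (2 * Real.pi * i.val / n)) (hn : 5 ≤ n)
    (τ : Finset (Sym2 (ZMod n))) :
    (earStarts τ).card ≤ (τ.val.map (len p)).count (chordLen n 2) := by
  rw [Multiset.count_map, ← Finset.filter_val]
  refine Finset.card_le_card_of_injOn (fun b => s(b, b + 2)) ?_ ?_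
  · intro b hb
    rw [Finset.mem_coe, Finset.mem_filter]
    refine ⟨mem_earStarts.1 hb, ?_⟩
    have := len_eq hp hn b 2
    rw [Nat.cast_ofNat] at this
    exact this.symm
  · intro b _ c _ h
    simp only [Sym2.eq_iff] at h
    rcases h with h | ⟨h1, h2⟩
    · exact h.1
    · -- `b = c + 2` and `b + 2 = c` force `4 = 0` in `ZMod n`
      refine absurd ?_ (natCast_ne (n := n) (x := 0) (y := 4) (by omega) (by omega))
      push_cast
      linear_combination h1 - h2

/-- Among sorted lists bounded below by `ℓ`, more occurrences of `ℓ` means lexicographically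
smaller. -/
lemma lex_of_count {ℓ : ℝ} : ∀ l l' : List ℝ, l.Pairwise (· ≤ ·) → (∀ x ∈ l, ℓ ≤ x) →
    (∀ x ∈ l', ℓ ≤ x) → l.length = l'.length → l'.count ℓ < l.count ℓ →
    List.Lex (· < ·) l l' := by
  intro l
  induction l with
  | nil => intro l' _ _ _ _ h; simp at h
  | cons x t ih =>
    intro l' hs hl hl' hlen hc
    cases l' with
    | nil => simp at hlen
    | cons y t' =>
      rw [List.pairwise_cons] at hs
      have hx : x = ℓ := by
        have hm : ℓ ∈ x :: t := List.count_pos_iff.1 (by omega)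
        rcases List.mem_cons.1 hm with h | h
        · exact h.symm
        · exact le_antisymm (hs.1 _ h) (hl x (by simp))
      subst hx
      rcases (hl' y (by simp)).eq_or_lt with h | h
      · subst h
        refine List.Lex.cons (ih t' hs.2 (fun z hz => hl z (by simp [hz]))
          (fun z hz => hl' z (by simp [hz])) (by simpa using hlen) (by simpa using hc))
      · exact List.Lex.rel h

/-- A triangulation with three ears has its minimal length at least three times, hence is beaten
by every snake. -/
lemma lex_of_three_ears {p : ZMod n → EuclideanSpace ℝ (Fin 2)}
    (hp : ∀ i : ZMod n, p i = pt (2 * Real.pi * i.val / n)) (hn : 5 ≤ n)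
    {τ : Finset (Sym2 (ZMod n))} (hτ : IsTriangulation τ) (hE : 2 < (earStarts τ).card)
    (b : ZMod n) (S : Finset ℕ) :
    List.Lex (· < ·) (sortedLengths p τ) (sortedLengths p (snake b S)) := by
  have hsn := snake_isTriangulation hn b S
  have low : ∀ σ : Finset (Sym2 (ZMod n)), IsTriangulation σ →
      ∀ x ∈ sortedLengths p σ, chordLen n 2 ≤ x := by
    intro σ hσ x hx
    rw [sortedLengths, Multiset.mem_sort, Multiset.mem_map] at hx
    obtain ⟨d, hd, rfl⟩ := hx
    exact (hσ.2.1 d hd).len_ge hp hn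
  have cnt : ∀ σ : Finset (Sym2 (ZMod n)), (sortedLengths p σ).count (chordLen n 2) =
      (σ.val.map (len p)).count (chordLen n 2) := by
    intro σ
    rw [sortedLengths, ← Multiset.coe_count, Multiset.sort_eq]
  have length : ∀ σ : Finset (Sym2 (ZMod n)), IsTriangulation σ →
      (sortedLengths p σ).length = n - 3 := by
    intro σ hσ
    rw [sortedLengths, Multiset.length_sort, Multiset.card_map]
    exact hσ.1
  refine lex_of_count (ℓ := chordLen n 2) _ _ (Multiset.pairwise_sort _ _) (low τ hτ)
    (low _ hsn) ?_ ?_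
  · rw [length τ hτ, length _ hsn]
  · rw [cnt, cnt]
    have h1 := count_snake hp hn b S
    have h2 := card_earStarts_le_count hp hn τ
    omega

/-- Length maximality means having at most (in fact exactly) two ears. -/
lemma lengthMaximal_iff {p : ZMod n → EuclideanSpace ℝ (Fin 2)}
    (hp : ∀ i : ZMod n, p i = pt (2 * Real.pi * i.val / n)) (hn : 5 ≤ n)
    (τ : Finset (Sym2 (ZMod n))) :
    LengthMaximal p τ ↔ IsTriangulation τ ∧ (earStarts τ).card ≤ 2 := by
  refine and_congr_right fun hτ => ⟨fun h => ?_, fun hE τ' hτ' => ?_⟩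
  · by_contra! hE
    have h1 : sortedLengths p τ < sortedLengths p (snake 0 ∅) :=
      lex_of_three_ears hp hn hτ hE 0 ∅
    rcases h _ (snake_isTriangulation hn 0 ∅) with h2 | h2
    · exact h1.ne h2.symm
    · exact lt_asymm h1 h2
  · obtain ⟨b, hb⟩ := hτ.earStarts_nonempty hn
    obtain ⟨S, -, rfl⟩ := hτ.eq_snake hn hE hb
    rcases le_or_gt (earStarts τ').card 2 with hE' | hE'
    · left
      obtain ⟨b', hb'⟩ := hτ'.earStarts_nonempty hn
      obtain ⟨S', -, rfl⟩ := hτ'.eq_snake hn hE' hb'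
      rw [sortedLengths, sortedLengths, map_len_snake hp hn, map_len_snake hp hn]
    · exact Or.inr (lex_of_three_ears hp hn hτ' hE' b S)

theorem stmt7 {n : ℕ} [NeZero n] (hn : 5 ≤ n)
    (p : ZMod n → EuclideanSpace ℝ (Fin 2))
    (hp : ∀ i : ZMod n, p i = pt (2 * Real.pi * i.val / n))
    :
    Nat.card {τ : Finset (Sym2 (ZMod n)) // LengthMaximal p τ} = n * 2 ^ (n - 5) := by
  classical
  rw [← card_twoEared hn, Nat.card_eq_fintype_card, Fintype.card_subtype]
  congr 1
  exact Finset.filter_congr fun τ _ => lengthMaximal_iff hp hn τ
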